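/- Let d ≥ 1 be a natural number, let p > 1 + 2/d be a real number, and set r = d(p − 1)/2. Then there exists ε > 0 such that for every measurable u₀ : ℝ^d → ℝ with u₀ ≥ 0 almost everywhere and ‖u₀‖_{L^r(ℝ^d)} + ‖u₀‖_{L^∞(ℝ^d)} ≤ ε, there exists a jointly measurable function u : [0,∞) × ℝ^d → ℝ with u(t, ·) ≥ 0 almost everywhere for each t, with sup_{0 ≤ t ≤ T} ‖u(t, ·)‖_{L^∞(ℝ^d)} < ∞ for every T > 0, and such that for every t ≥ 0 and almost every x ∈ ℝ^d: u(t, x) = ∫_{ℝ^d} G_t(x − y)·u₀(y) dy + ∫₀^t ∫_{ℝ^d} G_{t−s}(x − y)·u(s, y)^p dy ds (with the first term interpreted as u₀(x) when t = 0). -/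

import Mathlib

open MeasureTheory

/-- The Gaussian heat kernel `G_t(η) = (4πt)^{−d/2} exp(−|η|²/(4t))` on `ℝ^d`. -/
noncomputable def heatKernel (d : ℕ) (t : ℝ) (η : EuclideanSpace ℝ (Fin d)) : ℝ :=
  (4 * Real.pi * t) ^ (-(d : ℝ) / 2) * Real.exp (-‖η‖ ^ 2 / (4 * t))

/-!
Kato's method. The exponent `r = d (p - 1) / 2` is the one for which the `L^r` norm is invariant
under the scaling of the equation, and the heat flow smooths `L^r` into `L^q`, `q > r`, at the cost
of a factor `t^{-α}`. The condition `p > 1 + 2/d` says exactly that `r > 1`, which leaves room for a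
`q` with `α p < 1`. For `V` with `‖V(t)‖_∞ ≤ M` and `t^α ‖V(t)‖_q ≤ M`, Minkowski's inequality and
`V^p ≤ ‖V‖_∞ V^{p-1}` bound the Duhamel term of `V^p` in the same two norms by `M^p` times Beta
integrals that, by criticality, are uniform in `t`. Since `p > 1`, small data therefore keep all
Picard iterates in one ball. The iterates increase, and by monotone convergence their supremum is a
fixed point; no contraction estimate is needed.
-/

open scoped ENNReal

section MeasureInequalities

open ENNReal

variable {α β : Type*} [MeasurableSpace α] [MeasurableSpace β] {μ : Measure α} {ν : Measure β}
  {q : ℝ}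

theorem rpow_eq_self_mul_rpow_sub_one (x : ℝ≥0∞) (hq : 1 ≤ q) : x ^ q = x * x ^ (q - 1) := by
  nth_rw 2 [← rpow_one x]
  rw [← rpow_add_of_nonneg _ _ zero_le_one (sub_nonneg.2 hq), add_sub_cancel]

theorem rpow_lintegral_mul_le {w f : α → ℝ≥0∞} (hw : AEMeasurable w μ) (hf : AEMeasurable f μ)
    (hq : 1 ≤ q) :
    (∫⁻ a, w a * f a ∂μ) ^ q ≤ (∫⁻ a, w a ∂μ) ^ (q - 1) * ∫⁻ a, w a * f a ^ q ∂μ := by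
  have hq0 : 0 < q := by linarith
  have hq' : 0 ≤ q⁻¹ := by positivity
  have hq'' : 0 ≤ 1 - q⁻¹ := sub_nonneg.2 (inv_le_one_of_one_le₀ hq)
  have split (a : α) : w a * f a = w a ^ (1 - q⁻¹) * (w a * f a ^ q) ^ q⁻¹ := by
    rw [mul_rpow_of_nonneg _ _ hq', rpow_rpow_inv hq0.ne', ← mul_assoc,
      ← rpow_add_of_nonneg _ _ hq'' hq', sub_add_cancel, rpow_one]
  calc (∫⁻ a, w a * f a ∂μ) ^ q
      ≤ ((∫⁻ a, w a ∂μ) ^ (1 - q⁻¹) * (∫⁻ a, w a * f a ^ q ∂μ) ^ q⁻¹) ^ q := by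
        simp_rw [split]
        exact rpow_le_rpow (lintegral_mul_norm_pow_le hw (hw.mul (hf.pow_const q)) hq'' hq'
          (sub_add_cancel 1 q⁻¹)) hq0.le
    _ = (∫⁻ a, w a ∂μ) ^ (q - 1) * ∫⁻ a, w a * f a ^ q ∂μ := by
        rw [mul_rpow_of_nonneg _ _ hq0.le, rpow_inv_rpow hq0.ne', ← rpow_mul, sub_mul, one_mul,
          inv_mul_cancel₀ hq0.ne']

theorem eLpNorm'_rpow_div (f : α → ℝ≥0∞) {k : ℝ} (hk : 0 < k) :
    eLpNorm' (fun x => f x ^ k) (q / k) μ = eLpNorm' f q μ ^ k := by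
  simpa only [enorm_eq_self, div_mul_cancel₀ _ hk.ne'] using eLpNorm'_enorm_rpow f (q / k) k hk

theorem eLpNorm'_le_rpow_mul_rpow {f : α → ℝ≥0∞} {B : ℝ≥0∞} {m : ℝ} (hm : 0 < m) (hmq : m ≤ q)
    (hf : AEMeasurable f μ) (hB : ∀ᵐ x ∂μ, f x ≤ B) :
    eLpNorm' f q μ ≤ B ^ (1 - m / q) * eLpNorm' f m μ ^ (m / q) := by
  have hq0 : 0 < q := hm.trans_le hmq
  have hle : ∀ᵐ x ∂μ, f x ^ q ≤ B ^ (q - m) * f x ^ m := by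
    filter_upwards [hB] with x hx
    calc f x ^ q = f x ^ (q - m) * f x ^ m := by
          rw [← rpow_add_of_nonneg _ _ (sub_nonneg.2 hmq) hm.le, sub_add_cancel]
      _ ≤ B ^ (q - m) * f x ^ m := by gcongr
  calc eLpNorm' f q μ = (∫⁻ x, f x ^ q ∂μ) ^ q⁻¹ := by rw [eLpNorm', one_div]; rfl
    _ ≤ (B ^ (q - m) * eLpNorm' f m μ ^ m) ^ q⁻¹ := by
        refine rpow_le_rpow ((lintegral_mono_ae hle).trans_eq ?_) (by positivity)
        rw [lintegral_const_mul'' _ (hf.pow_const m), ← lintegral_rpow_enorm_eq_rpow_eLpNorm' hm]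
        rfl
    _ = B ^ (1 - m / q) * eLpNorm' f m μ ^ (m / q) := by
        rw [mul_rpow_of_nonneg _ _ (by positivity), ← rpow_mul, ← rpow_mul, sub_mul,
          mul_inv_cancel₀ hq0.ne', div_eq_mul_inv]

theorem lintegral_rpow_div_eLpNorm'_le_one {f : α → ℝ≥0∞} (hf : AEMeasurable f μ) (hq : 0 < q) :
    ∫⁻ x, (f x / eLpNorm' f q μ) ^ q ∂μ ≤ 1 := by
  simp_rw [div_rpow_of_nonneg _ _ hq.le, div_eq_mul_inv]
  rw [lintegral_mul_const'' _ (hf.pow_const q), ← lintegral_rpow_enorm_eq_rpow_eLpNorm' hq]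
  exact ENNReal.div_self_le_one

theorem ae_eLpNorm'_mul_div_eq {f : α → ℝ≥0∞} (hf : AEMeasurable f μ) (hq : 0 < q)
    (hfq : eLpNorm' f q μ ≠ ⊤) :
    ∀ᵐ x ∂μ, eLpNorm' f q μ * (f x / eLpNorm' f q μ) = f x := by
  by_cases h0 : eLpNorm' f q μ = 0
  · filter_upwards [ae_eq_zero_of_eLpNorm'_eq_zero hq.le hf.aestronglyMeasurable h0] with x hx
    rw [h0, hx, Pi.zero_apply, zero_mul]
  · exact .of_forall fun x => ENNReal.mul_div_cancel h0 hfq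

theorem measurable_eLpNorm' [SFinite μ] {F : β → α → ℝ≥0∞}
    (hF : Measurable (Function.uncurry F)) : Measurable fun s => eLpNorm' (F s) q μ :=
  ((hF.pow_const q).lintegral_prod_right').pow_const (1 / q)

theorem ae_ae_eLpNorm'_mul_div_eq [SFinite μ] [SFinite ν] {F : β → α → ℝ≥0∞}
    (hF : Measurable (Function.uncurry F)) (hq : 0 < q)
    (hF_top : ∫⁻ s, eLpNorm' (F s) q μ ∂ν ≠ ⊤) :
    ∀ᵐ x ∂μ, ∀ᵐ s ∂ν, eLpNorm' (F s) q μ * (F s x / eLpNorm' (F s) q μ) = F s x := by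
  have hw : Measurable fun s => eLpNorm' (F s) q μ := measurable_eLpNorm' hF
  have hF' : Measurable fun z : α × β => F z.2 z.1 := hF.comp measurable_swap
  have hset : MeasurableSet {z : α × β |
      eLpNorm' (F z.2) q μ * (F z.2 z.1 / eLpNorm' (F z.2) q μ) = F z.2 z.1} :=
    measurableSet_eq_fun ((hw.comp measurable_snd).mul (hF'.div (hw.comp measurable_snd))) hF'
  refine (Measure.ae_ae_comm (p := fun x s =>
    eLpNorm' (F s) q μ * (F s x / eLpNorm' (F s) q μ) = F s x) hset).2 ?_
  filter_upwards [ae_lt_top hw hF_top] with s hs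
  exact ae_eLpNorm'_mul_div_eq hF.of_uncurry_left.aemeasurable hq hs.ne

-- Jensen's inequality for the weight `s ↦ ‖F s‖_q`, which normalises every slice of `F`.
theorem eLpNorm'_lintegral_le [SFinite μ] [SFinite ν] {F : β → α → ℝ≥0∞}
    (hF : Measurable (Function.uncurry F)) (hq : 1 ≤ q) :
    eLpNorm' (fun x => ∫⁻ s, F s x ∂ν) q μ ≤ ∫⁻ s, eLpNorm' (F s) q μ ∂ν := by
  have hq0 : 0 < q := by linarith
  set w : β → ℝ≥0∞ := fun s => eLpNorm' (F s) q μ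
  have hw : Measurable w := measurable_eLpNorm' hF
  have hFw : Measurable fun z : α × β => F z.2 z.1 / w z.2 :=
    (hF.comp measurable_swap).div (hw.comp measurable_snd)
  have hwFw : Measurable fun z : α × β => w z.2 * (F z.2 z.1 / w z.2) ^ q :=
    (hw.comp measurable_snd).mul (hFw.pow_const q)
  rcases eq_or_ne (∫⁻ s, w s ∂ν) ⊤ with hW | hW
  · exact hW.symm ▸ le_top
  rw [eLpNorm', one_div, rpow_inv_le_iff hq0]
  calc ∫⁻ x, (∫⁻ s, F s x ∂ν) ^ q ∂μ
      ≤ ∫⁻ x, (∫⁻ s, w s ∂ν) ^ (q - 1) * ∫⁻ s, w s * (F s x / w s) ^ q ∂ν ∂μ := by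
        refine lintegral_mono_ae ?_
        filter_upwards [ae_ae_eLpNorm'_mul_div_eq hF hq0 hW] with x hx
        rw [← lintegral_congr_ae hx]
        exact rpow_lintegral_mul_le hw.aemeasurable
          (hFw.comp measurable_prodMk_left).aemeasurable hq
    _ = (∫⁻ s, w s ∂ν) ^ (q - 1) * ∫⁻ s, w s * ∫⁻ x, (F s x / w s) ^ q ∂μ ∂ν := by
        rw [lintegral_const_mul _ hwFw.lintegral_prod_right',
          lintegral_lintegral_swap hwFw.aemeasurable]
        simp_rw [lintegral_const_mul _ ((hF.of_uncurry_left.div_const _).pow_const q)]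
    _ ≤ (∫⁻ s, w s ∂ν) ^ (q - 1) * ∫⁻ s, w s ∂ν := by
        gcongr with s
        exact mul_le_of_le_one_right' <|
          lintegral_rpow_div_eLpNorm'_le_one hF.of_uncurry_left.aemeasurable hq0
    _ = (∫⁻ s, w s ∂ν) ^ q := by rw [mul_comm, ← rpow_eq_self_mul_rpow_sub_one _ hq]

theorem ae_ofReal_le_eLpNorm_top (f : α → ℝ) (μ : Measure α) :
    ∀ᵐ y ∂μ, ENNReal.ofReal (f y) ≤ eLpNorm f ⊤ μ := by
  filter_upwards [enorm_ae_le_eLpNormEssSup f μ] with y hy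
  exact (Real.ofReal_le_enorm _).trans (hy.trans_eq eLpNorm_exponent_top.symm)

theorem eLpNorm'_ofReal_le_eLpNorm (hq : 0 < q) (f : α → ℝ) (μ : Measure α) :
    eLpNorm' (fun y => ENNReal.ofReal (f y)) q μ ≤ eLpNorm f (ENNReal.ofReal q) μ := by
  rw [eLpNorm_eq_eLpNorm' (ENNReal.ofReal_pos.2 hq).ne' ENNReal.ofReal_ne_top,
    ENNReal.toReal_ofReal hq.le]
  exact eLpNorm'_mono_enorm_ae hq.le (.of_forall fun y => Real.ofReal_le_enorm _)

theorem lintegral_Ioo_zero_one_rpow_mul_one_sub_rpow {a b : ℝ} (ha : 0 < a) (hb : 0 < b) :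
    ∫⁻ s in Set.Ioo 0 1, ENNReal.ofReal (s ^ (a - 1) * (1 - s) ^ (b - 1)) =
      ENNReal.ofReal (ProbabilityTheory.beta a b) := by
  have hβ := ProbabilityTheory.beta_pos ha hb
  have h := ProbabilityTheory.lintegral_betaPDF_eq_one ha hb
  simp_rw [ProbabilityTheory.lintegral_betaPDF, mul_assoc,
    ENNReal.ofReal_mul (one_div_pos.2 hβ).le] at h
  rw [lintegral_const_mul _ (by fun_prop), one_div, ENNReal.ofReal_inv_of_pos hβ] at h
  exact (ENNReal.eq_inv_of_mul_eq_one_left ((mul_comm _ _).trans h)).trans (inv_inv _)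

theorem lintegral_Ioo_rpow_mul_sub_rpow {a b t : ℝ} (ha : 0 < a) (hb : 0 < b) (ht : 0 < t) :
    ∫⁻ s in Set.Ioo 0 t, ENNReal.ofReal (s ^ (a - 1) * (t - s) ^ (b - 1)) =
      ENNReal.ofReal (ProbabilityTheory.beta a b) * ENNReal.ofReal (t ^ (a + b - 1)) := by
  have himage : Set.Ioo 0 t = (t * ·) '' Set.Ioo 0 1 := by
    rw [Set.image_mul_left_Ioo ht, mul_zero, mul_one]
  have hscale : ∀ s ∈ Set.Ioo (0 : ℝ) 1,
      ENNReal.ofReal |t| * ENNReal.ofReal ((t * s) ^ (a - 1) * (t - t * s) ^ (b - 1)) =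
        ENNReal.ofReal (s ^ (a - 1) * (1 - s) ^ (b - 1)) * ENNReal.ofReal (t ^ (a + b - 1)) := by
    rintro s ⟨hs0, hs1⟩
    rw [← ENNReal.ofReal_mul (abs_nonneg t), ← ENNReal.ofReal_mul' (by positivity), abs_of_pos ht,
      ← mul_one_sub, Real.mul_rpow ht.le hs0.le, Real.mul_rpow ht.le (sub_nonneg.2 hs1.le),
      show a + b - 1 = 1 + (a - 1) + (b - 1) by ring, Real.rpow_add ht, Real.rpow_add ht,
      Real.rpow_one]
    ring_nf
  rw [himage, lintegral_image_eq_lintegral_abs_deriv_mul measurableSet_Ioo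
      (fun s _ => (hasDerivAt_const_mul t).hasDerivWithinAt) (mul_right_injective₀ ht.ne').injOn,
    setLIntegral_congr_fun measurableSet_Ioo hscale, lintegral_mul_const _ (by fun_prop),
    lintegral_Ioo_zero_one_rpow_mul_one_sub_rpow ha hb]

end MeasureInequalities

section HeatKernel

variable {d : ℕ} {t : ℝ}

theorem measurable_heatKernel : Measurable (Function.uncurry (heatKernel d)) := by
  unfold heatKernel Function.uncurry
  fun_prop

theorem heatKernel_nonneg (ht : 0 ≤ t) (η : EuclideanSpace ℝ (Fin d)) : 0 ≤ heatKernel d t η := by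
  unfold heatKernel
  positivity

theorem heatKernel_le (ht : 0 < t) (η : EuclideanSpace ℝ (Fin d)) :
    heatKernel d t η ≤ t ^ (-(d : ℝ) / 2) := by
  have hscale : t ≤ 4 * Real.pi * t := by nlinarith [Real.pi_gt_three]
  have hexp : Real.exp (-‖η‖ ^ 2 / (4 * t)) ≤ 1 :=
    Real.exp_le_one_iff.2 (div_nonpos_of_nonpos_of_nonneg (by simp) (by positivity))
  calc heatKernel d t η ≤ t ^ (-(d : ℝ) / 2) * 1 :=
        mul_le_mul (Real.rpow_le_rpow_of_nonpos ht hscale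
          (div_nonpos_of_nonpos_of_nonneg (by simp) zero_le_two)) hexp (by positivity)
          (by positivity)
    _ = t ^ (-(d : ℝ) / 2) := mul_one _

theorem integral_heatKernel (ht : 0 < t) : ∫ η, heatKernel d t η = 1 := by
  have hkernel (η : EuclideanSpace ℝ (Fin d)) : heatKernel d t η =
      (4 * Real.pi * t) ^ (-(d : ℝ) / 2) * Real.exp (-(1 / (4 * t)) * ‖η‖ ^ 2) := by
    rw [heatKernel, neg_mul, one_div_mul_eq_div, neg_div, neg_div]
  simp_rw [hkernel]
  rw [integral_const_mul, GaussianFourier.integral_rexp_neg_mul_sq_norm (by positivity),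
    finrank_euclideanSpace_fin, show Real.pi / (1 / (4 * t)) = 4 * Real.pi * t by field_simp,
    ← Real.rpow_add (by positivity), neg_div, neg_add_cancel, Real.rpow_zero]

theorem lintegral_heatKernel (ht : 0 < t) : ∫⁻ η, ENNReal.ofReal (heatKernel d t η) = 1 := by
  have hint : Integrable (heatKernel d t) :=
    .of_integral_ne_zero (by rw [integral_heatKernel ht]; exact one_ne_zero)
  rw [← ofReal_integral_eq_lintegral_ofReal hint (.of_forall (heatKernel_nonneg ht.le)),
    integral_heatKernel ht, ENNReal.ofReal_one]

theorem lintegral_heatKernel_sub_left (ht : 0 < t) (x : EuclideanSpace ℝ (Fin d)) :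
    ∫⁻ y, ENNReal.ofReal (heatKernel d t (x - y)) = 1 := by
  rw [lintegral_sub_left_eq_self (fun y => ENNReal.ofReal (heatKernel d t y)) x,
    lintegral_heatKernel ht]

theorem lintegral_heatKernel_sub_right (ht : 0 < t) (y : EuclideanSpace ℝ (Fin d)) :
    ∫⁻ x, ENNReal.ofReal (heatKernel d t (x - y)) = 1 := by
  rw [lintegral_sub_right_eq_self (fun x => ENNReal.ofReal (heatKernel d t x)) y,
    lintegral_heatKernel ht]

end HeatKernel

section HeatFlow

variable {d : ℕ} {t m q : ℝ} {c : ℝ≥0∞} {f g : EuclideanSpace ℝ (Fin d) → ℝ≥0∞}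

/-- The heat semigroup `e^{tΔ} f = G_t * f`, acting on functions with values in `[0, ∞]` so that
it needs no integrability assumption. -/
noncomputable def heatFlow (t : ℝ) (f : EuclideanSpace ℝ (Fin d) → ℝ≥0∞)
    (x : EuclideanSpace ℝ (Fin d)) : ℝ≥0∞ :=
  ∫⁻ y, ENNReal.ofReal (heatKernel d t (x - y)) * f y

theorem measurable_ofReal_heatKernel_sub {ι : Type*} [MeasurableSpace ι] {τ : ι → ℝ}
    {ξ η : ι → EuclideanSpace ℝ (Fin d)} (hτ : Measurable τ) (hξ : Measurable ξ)
    (hη : Measurable η) :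
    Measurable fun i => ENNReal.ofReal (heatKernel d (τ i) (ξ i - η i)) :=
  (measurable_heatKernel.comp (hτ.prodMk (hξ.sub hη))).ennreal_ofReal

theorem measurable_ofReal_heatKernel_const_sub (t : ℝ) (x : EuclideanSpace ℝ (Fin d)) :
    Measurable fun y => ENNReal.ofReal (heatKernel d t (x - y)) :=
  measurable_ofReal_heatKernel_sub measurable_const measurable_const measurable_id

theorem measurable_uncurry_heatFlow {ι : Type*} [MeasurableSpace ι] {τ : ι → ℝ}
    {f : ι → EuclideanSpace ℝ (Fin d) → ℝ≥0∞} {ξ : ι → EuclideanSpace ℝ (Fin d)}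
    (hτ : Measurable τ) (hf : Measurable (Function.uncurry f)) (hξ : Measurable ξ) :
    Measurable fun i => heatFlow (τ i) (f i) (ξ i) := by
  have hkernel : Measurable fun z : ι × EuclideanSpace ℝ (Fin d) =>
      ENNReal.ofReal (heatKernel d (τ z.1) (ξ z.1 - z.2)) :=
    measurable_ofReal_heatKernel_sub (hτ.comp measurable_fst) (hξ.comp measurable_fst)
      measurable_snd
  exact (hkernel.mul hf).lintegral_prod_right'

theorem measurable_heatFlow (hf : Measurable f) : Measurable (heatFlow t f) :=
  measurable_uncurry_heatFlow measurable_const (hf.comp measurable_snd) measurable_id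

theorem heatFlow_mono_ae (h : f ≤ᵐ[volume] g) (x : EuclideanSpace ℝ (Fin d)) :
    heatFlow t f x ≤ heatFlow t g x :=
  lintegral_mono_ae (h.mono fun _ hy => mul_le_mul_right hy _)

theorem heatFlow_const_mul (hf : Measurable f) (c : ℝ≥0∞) (x : EuclideanSpace ℝ (Fin d)) :
    heatFlow t (fun y => c * f y) x = c * heatFlow t f x := by
  simp_rw [heatFlow, mul_left_comm _ c]
  exact lintegral_const_mul c ((measurable_ofReal_heatKernel_const_sub t x).mul hf)

theorem heatFlow_le_of_ae_le (ht : 0 < t) (hf : ∀ᵐ y, f y ≤ c) (x : EuclideanSpace ℝ (Fin d)) :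
    heatFlow t f x ≤ c :=
  calc heatFlow t f x ≤ heatFlow t (fun _ => c) x := heatFlow_mono_ae hf x
    _ = c := by
      rw [heatFlow, lintegral_mul_const _ (measurable_ofReal_heatKernel_const_sub t x),
        lintegral_heatKernel_sub_left ht, one_mul]

theorem heatFlow_rpow_le (ht : 0 < t) (hf : Measurable f) (hm : 1 ≤ m)
    (x : EuclideanSpace ℝ (Fin d)) : heatFlow t f x ^ m ≤ heatFlow t (fun y => f y ^ m) x := by
  simpa only [heatFlow, lintegral_heatKernel_sub_left ht, ENNReal.one_rpow, one_mul] using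
    rpow_lintegral_mul_le (μ := volume) (measurable_ofReal_heatKernel_const_sub t x).aemeasurable
      hf.aemeasurable hm

theorem lintegral_heatFlow (ht : 0 < t) (hf : Measurable f) :
    ∫⁻ x, heatFlow t f x = ∫⁻ y, f y := by
  have hkernel : Measurable fun z : EuclideanSpace ℝ (Fin d) × EuclideanSpace ℝ (Fin d) =>
      ENNReal.ofReal (heatKernel d t (z.1 - z.2)) * f z.2 :=
    (measurable_ofReal_heatKernel_sub measurable_const measurable_fst measurable_snd).mul
      (hf.comp measurable_snd)
  have hcolumn (y : EuclideanSpace ℝ (Fin d)) :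
      Measurable fun x => ENNReal.ofReal (heatKernel d t (x - y)) :=
    measurable_ofReal_heatKernel_sub measurable_const measurable_id measurable_const
  calc ∫⁻ x, heatFlow t f x = ∫⁻ y, ∫⁻ x, ENNReal.ofReal (heatKernel d t (x - y)) * f y :=
        lintegral_lintegral_swap hkernel.aemeasurable
    _ = ∫⁻ y, f y := by
        simp_rw [lintegral_mul_const _ (hcolumn _), lintegral_heatKernel_sub_right ht, one_mul]

theorem eLpNorm'_heatFlow_le (ht : 0 < t) (hf : Measurable f) (hm : 1 ≤ m) :
    eLpNorm' (heatFlow t f) m volume ≤ eLpNorm' f m volume := by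
  refine ENNReal.rpow_le_rpow ?_ (by positivity)
  calc ∫⁻ x, heatFlow t f x ^ m ≤ ∫⁻ x, heatFlow t (fun y => f y ^ m) x :=
        lintegral_mono (heatFlow_rpow_le ht hf hm)
    _ = ∫⁻ y, f y ^ m := lintegral_heatFlow ht (hf.pow_const m)

theorem heatFlow_le_eLpNorm' (ht : 0 < t) (hf : Measurable f) (hm : 1 ≤ m)
    (x : EuclideanSpace ℝ (Fin d)) :
    heatFlow t f x ≤ ENNReal.ofReal (t ^ (-(d / (2 * m)))) * eLpNorm' f m volume := by
  have hm0 : 0 < m := by linarith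
  rw [← ENNReal.rpow_le_rpow_iff hm0]
  calc heatFlow t f x ^ m ≤ heatFlow t (fun y => f y ^ m) x := heatFlow_rpow_le ht hf hm x
    _ ≤ ∫⁻ y, ENNReal.ofReal (t ^ (-(d : ℝ) / 2)) * f y ^ m := by
        refine lintegral_mono fun y => ?_
        gcongr
        exact heatKernel_le ht _
    _ = (ENNReal.ofReal (t ^ (-(d / (2 * m)))) * eLpNorm' f m volume) ^ m := by
        rw [lintegral_const_mul _ (hf.pow_const m), ENNReal.mul_rpow_of_nonneg _ _ hm0.le,
          ENNReal.ofReal_rpow_of_pos (by positivity), ← Real.rpow_mul ht.le,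
          ← lintegral_rpow_enorm_eq_rpow_eLpNorm' hm0,
          show -(d / (2 * m)) * m = -(d : ℝ) / 2 by field_simp]
        rfl

theorem eLpNorm'_heatFlow_le_mul (ht : 0 < t) (hf : Measurable f) (hm : 1 ≤ m) (hmq : m ≤ q) :
    eLpNorm' (heatFlow t f) q volume ≤
      ENNReal.ofReal (t ^ (-(d / 2 * (1 / m - 1 / q)))) * eLpNorm' f m volume := by
  have hm0 : 0 < m := by linarith
  have hq0 : 0 < q := by linarith
  have hθ : 0 ≤ 1 - m / q := sub_nonneg.2 ((div_le_one hq0).2 hmq)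
  calc eLpNorm' (heatFlow t f) q volume
      ≤ (ENNReal.ofReal (t ^ (-(d / (2 * m)))) * eLpNorm' f m volume) ^ (1 - m / q) *
          eLpNorm' (heatFlow t f) m volume ^ (m / q) :=
        eLpNorm'_le_rpow_mul_rpow hm0 hmq (measurable_heatFlow hf).aemeasurable
          (.of_forall (heatFlow_le_eLpNorm' ht hf hm))
    _ ≤ (ENNReal.ofReal (t ^ (-(d / (2 * m)))) * eLpNorm' f m volume) ^ (1 - m / q) *
          eLpNorm' f m volume ^ (m / q) := by
        gcongr
        exact eLpNorm'_heatFlow_le ht hf hm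
    _ = ENNReal.ofReal (t ^ (-(d / 2 * (1 / m - 1 / q)))) * eLpNorm' f m volume := by
        rw [ENNReal.mul_rpow_of_nonneg _ _ hθ, mul_assoc,
          ← ENNReal.rpow_add_of_nonneg _ _ hθ (by positivity), sub_add_cancel, ENNReal.rpow_one,
          ENNReal.ofReal_rpow_of_pos (by positivity), ← Real.rpow_mul ht.le,
          show -(d / (2 * m)) * (1 - m / q) = -(d / 2 * (1 / m - 1 / q)) by field_simp]

theorem heatFlow_rpow_le_mul_eLpNorm' {p : ℝ} (ht : 0 < t) (hf : Measurable f) (hp : 1 < p)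
    (hpq : p - 1 ≤ q) (hfc : ∀ᵐ y, f y ≤ c) (x : EuclideanSpace ℝ (Fin d)) :
    heatFlow t (fun y => f y ^ p) x ≤
      c * (ENNReal.ofReal (t ^ (-(d * (p - 1) / (2 * q)))) * eLpNorm' f q volume ^ (p - 1)) := by
  have hp1 : 0 < p - 1 := sub_pos.2 hp
  have hfp : (fun y => f y ^ p) ≤ᵐ[volume] fun y => c * f y ^ (p - 1) := by
    filter_upwards [hfc] with y hy
    calc f y ^ p = f y * f y ^ (p - 1) := rpow_eq_self_mul_rpow_sub_one _ hp.le
      _ ≤ c * f y ^ (p - 1) := by gcongr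
  calc heatFlow t (fun y => f y ^ p) x ≤ heatFlow t (fun y => c * f y ^ (p - 1)) x :=
        heatFlow_mono_ae hfp x
    _ = c * heatFlow t (fun y => f y ^ (p - 1)) x := heatFlow_const_mul (hf.pow_const _) c x
    _ ≤ c * (ENNReal.ofReal (t ^ (-(d / (2 * (q / (p - 1)))))) *
          eLpNorm' (fun y => f y ^ (p - 1)) (q / (p - 1)) volume) := by
        gcongr
        exact heatFlow_le_eLpNorm' ht (hf.pow_const _) ((one_le_div hp1).2 hpq) x
    _ = c * (ENNReal.ofReal (t ^ (-(d * (p - 1) / (2 * q)))) *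
          eLpNorm' f q volume ^ (p - 1)) := by
        rw [eLpNorm'_rpow_div f hp1,
          show d / (2 * (q / (p - 1))) = d * (p - 1) / (2 * q) by field_simp]

theorem eLpNorm'_heatFlow_rpow_le {p : ℝ} (ht : 0 < t) (hf : Measurable f) (hp : 1 ≤ p)
    (hpq : p ≤ q) :
    eLpNorm' (heatFlow t fun y => f y ^ p) q volume ≤
      ENNReal.ofReal (t ^ (-(d * (p - 1) / (2 * q)))) * eLpNorm' f q volume ^ p := by
  have hp0 : 0 < p := by linarith
  have hq0 : 0 < q := by linarith
  have h := eLpNorm'_heatFlow_le_mul ht (hf.pow_const p) ((one_le_div hp0).2 hpq)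
    (div_le_self hq0.le hp)
  rwa [eLpNorm'_rpow_div f hp0,
    show d / 2 * (1 / (q / p) - 1 / q) = d * (p - 1) / (2 * q) by field_simp] at h

end HeatFlow

section Duhamel

variable {d : ℕ} {q t : ℝ}

theorem heatFlow_iSup {f : ℕ → EuclideanSpace ℝ (Fin d) → ℝ≥0∞} (hf : ∀ n, Measurable (f n))
    (hmono : Monotone f) (x : EuclideanSpace ℝ (Fin d)) :
    heatFlow t (⨆ n, f n) x = ⨆ n, heatFlow t (f n) x := by
  simp_rw [heatFlow, iSup_apply, ENNReal.mul_iSup]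
  exact lintegral_iSup (fun n => (measurable_ofReal_heatKernel_const_sub t x).mul (hf n))
    fun _ _ hnm y => mul_le_mul_right (hmono hnm y) _

/-- The Duhamel integral `∫₀ᵗ e^{(t-s)Δ} F(s) ds`, the solution of `∂ₜw = Δw + F` that vanishes
at time `0`, for sources with values in `[0, ∞]`. -/
noncomputable def duhamel (F : ℝ → EuclideanSpace ℝ (Fin d) → ℝ≥0∞) (t : ℝ)
    (x : EuclideanSpace ℝ (Fin d)) : ℝ≥0∞ :=
  ∫⁻ s in Set.Ioo 0 t, heatFlow (t - s) (F s) x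

variable {F G : ℝ → EuclideanSpace ℝ (Fin d) → ℝ≥0∞}

theorem measurable_uncurry_heatFlow_sub (hF : Measurable (Function.uncurry F)) (t : ℝ) :
    Measurable (Function.uncurry fun s x => heatFlow (t - s) (F s) x) := by
  have hsource : Measurable fun w : (ℝ × EuclideanSpace ℝ (Fin d)) × EuclideanSpace ℝ (Fin d) =>
      F w.1.1 w.2 := hF.comp (measurable_fst.fst.prodMk measurable_snd)
  exact measurable_uncurry_heatFlow (measurable_fst.const_sub t) hsource measurable_snd

theorem measurable_uncurry_duhamel (hF : Measurable (Function.uncurry F)) :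
    Measurable (Function.uncurry (duhamel F)) := by
  have hsource : Measurable fun w : ((ℝ × EuclideanSpace ℝ (Fin d)) × ℝ) ×
      EuclideanSpace ℝ (Fin d) => F w.1.2 w.2 :=
    hF.comp (measurable_fst.snd.prodMk measurable_snd)
  have hflow : Measurable fun z : (ℝ × EuclideanSpace ℝ (Fin d)) × ℝ =>
      heatFlow (z.1.1 - z.2) (F z.2) z.1.2 :=
    measurable_uncurry_heatFlow (by fun_prop) hsource (by fun_prop)
  have htime : MeasurableSet {z : (ℝ × EuclideanSpace ℝ (Fin d)) × ℝ | z.2 ∈ Set.Ioo 0 z.1.1} :=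
    (measurableSet_lt measurable_const measurable_snd).inter
      (measurableSet_lt measurable_snd (measurable_fst.comp measurable_fst))
  have hindicator : Function.uncurry (duhamel F) = fun z =>
      ∫⁻ s, {z : (ℝ × EuclideanSpace ℝ (Fin d)) × ℝ | z.2 ∈ Set.Ioo 0 z.1.1}.indicator
        (fun z => heatFlow (z.1.1 - z.2) (F z.2) z.1.2) (z, s) :=
    funext fun _ => (lintegral_indicator measurableSet_Ioo _).symm
  exact hindicator ▸ (hflow.indicator htime).lintegral_prod_right'

theorem duhamel_mono (h : F ≤ G) : duhamel F ≤ duhamel G := fun _ x =>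
  lintegral_mono fun s => heatFlow_mono_ae (.of_forall (h s)) x

theorem duhamel_iSup {F : ℕ → ℝ → EuclideanSpace ℝ (Fin d) → ℝ≥0∞}
    (hF : ∀ n, Measurable (Function.uncurry (F n))) (hmono : Monotone F) (t : ℝ)
    (x : EuclideanSpace ℝ (Fin d)) :
    duhamel (⨆ n, F n) t x = ⨆ n, duhamel (F n) t x := by
  have hflow (s : ℝ) : heatFlow (t - s) ((⨆ n, F n) s) x = ⨆ n, heatFlow (t - s) (F n s) x := by
    rw [iSup_apply]
    exact heatFlow_iSup (fun n => (hF n).of_uncurry_left) (fun _ _ hnm => hmono hnm s) x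
  simp_rw [duhamel, hflow]
  exact lintegral_iSup (fun n => (measurable_uncurry_heatFlow_sub (hF n) t).of_uncurry_right)
    fun _ _ hnm s => heatFlow_mono_ae (.of_forall (hmono hnm s)) x

theorem eLpNorm'_duhamel_le (hF : Measurable (Function.uncurry F)) (hq : 1 ≤ q) :
    eLpNorm' (duhamel F t) q volume ≤
      ∫⁻ s in Set.Ioo 0 t, eLpNorm' (heatFlow (t - s) (F s)) q volume :=
  eLpNorm'_lintegral_le (measurable_uncurry_heatFlow_sub hF t) hq

end Duhamel

section KatoEstimates

/-- Exponents for Kato's method in the auxiliary norm `sup_t t^α ‖u(t)‖_q`: `r` is the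
scaling-critical Lebesgue exponent of `∂ₜu = Δu + u^p`, and `α` is the rate at which the heat flow
decays from `L^r` to `L^q`. -/
structure KatoExponents (d : ℕ) (p r q α : ℝ) : Prop where
  one_lt_p : 1 < p
  one_le_r : 1 ≤ r
  r_le_q : r ≤ q
  p_le_q : p ≤ q
  decay_pos : 0 < α
  decay_mul_lt_one : α * p < 1
  critical : d * (p - 1) = 2 * r
  decay_eq : α = d / 2 * (1 / r - 1 / q)

theorem exists_katoExponents {d : ℕ} {p : ℝ} (hd : 0 < d) (hp : 1 + 2 / (d : ℝ) < p) :
    ∃ q α, KatoExponents d p (d * (p - 1) / 2) q α := by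
  have hd' : (0 : ℝ) < d := Nat.cast_pos.2 hd
  have hp1 : 1 < p := (le_add_of_nonneg_right (by positivity)).trans_lt hp
  have hr1 : 1 < d * (p - 1) / 2 := by
    have := (div_lt_iff₀' hd').1 (lt_sub_iff_add_lt'.2 hp)
    linarith
  set r : ℝ := d * (p - 1) / 2 with hr
  obtain ⟨q, hq, hqpr⟩ : ∃ q, max p r < q ∧ q < p * r :=
    exists_between (max_lt (by nlinarith) (by nlinarith))
  obtain ⟨hpq, hrq⟩ := max_lt_iff.1 hq
  have hr0 : 0 < r := by linarith
  have hq0 : 0 < q := by linarith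
  refine ⟨q, d / 2 * (1 / r - 1 / q), hp1, hr1.le, hrq.le, hpq.le, ?_, ?_, by rw [hr]; ring, rfl⟩
  · exact mul_pos (by positivity) (sub_pos.2 (one_div_lt_one_div_of_lt hr0 hrq))
  · have hα : d / 2 * (1 / r - 1 / q) = (1 - r / q) / (p - 1) := by
      rw [eq_div_iff (by linarith), mul_right_comm, div_mul_eq_mul_div, ← hr]
      field_simp
    have hratio : 1 < p * (r / q) := by rwa [← mul_div_assoc, one_lt_div hq0]
    rw [hα, div_mul_eq_mul_div, div_lt_one (by linarith)]
    linarith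

variable {d : ℕ} {p r q α : ℝ}

namespace KatoExponents

theorem p_pos (h : KatoExponents d p r q α) : 0 < p := one_pos.trans h.one_lt_p

theorem one_le_q (h : KatoExponents d p r q α) : 1 ≤ q := h.one_le_r.trans h.r_le_q

theorem decay_mul_sub_one_pos (h : KatoExponents d p r q α) : 0 < α * (p - 1) :=
  mul_pos h.decay_pos (sub_pos.2 h.one_lt_p)

theorem decay_mul_sub_one_lt_one (h : KatoExponents d p r q α) : α * (p - 1) < 1 := by
  linarith [h.decay_mul_lt_one, h.decay_pos]

theorem scaling (h : KatoExponents d p r q α) :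
    d * (p - 1) / (2 * q) = 1 - α * (p - 1) := by
  have hr : 0 < r := one_pos.trans_le h.one_le_r
  have hq : 0 < q := hr.trans_le h.r_le_q
  rw [h.decay_eq, show d / 2 * (1 / r - 1 / q) * (p - 1) = d * (p - 1) / 2 * (1 / r - 1 / q) by
    ring, h.critical]
  field_simp
  ring

end KatoExponents

/-- The space-time bounds `‖V(t)‖_∞ ≤ M` and `t^α ‖V(t)‖_q ≤ M` for all `t > 0`. The first one is
required at every point, not just almost everywhere. -/
structure KatoBound (q α : ℝ) (M : ℝ≥0∞) (V : ℝ → EuclideanSpace ℝ (Fin d) → ℝ≥0∞) : Prop where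
  apply_le : ∀ ⦃t⦄, 0 < t → ∀ x, V t x ≤ M
  eLpNorm'_le : ∀ ⦃t⦄, 0 < t → eLpNorm' (V t) q volume ≤ M * ENNReal.ofReal (t ^ (-α))

variable {M N : ℝ≥0∞} {V W : ℝ → EuclideanSpace ℝ (Fin d) → ℝ≥0∞}

theorem KatoBound.mono (hV : KatoBound q α M V) (hMN : M ≤ N) : KatoBound q α N V where
  apply_le _ ht x := (hV.apply_le ht x).trans hMN
  eLpNorm'_le _ ht := (hV.eLpNorm'_le ht).trans (mul_le_mul_left hMN _)

theorem KatoBound.add (hV : KatoBound q α M V) (hW : KatoBound q α N W)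
    (hVm : ∀ t, Measurable (V t)) (hWm : ∀ t, Measurable (W t)) (hq : 1 ≤ q) :
    KatoBound q α (M + N) (V + W) where
  apply_le _ ht x := add_le_add (hV.apply_le ht x) (hW.apply_le ht x)
  eLpNorm'_le t ht :=
    calc eLpNorm' ((V + W) t) q volume
        ≤ eLpNorm' (V t) q volume + eLpNorm' (W t) q volume :=
          eLpNorm'_add_le (hVm t).aestronglyMeasurable (hWm t).aestronglyMeasurable hq
      _ ≤ (M + N) * ENNReal.ofReal (t ^ (-α)) := by
          rw [add_mul]
          exact add_le_add (hV.eLpNorm'_le ht) (hW.eLpNorm'_le ht)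

theorem katoBound_zero (hq : 0 < q) :
    KatoBound q α M (0 : ℝ → EuclideanSpace ℝ (Fin d) → ℝ≥0∞) where
  apply_le _ _ _ := zero_le
  eLpNorm'_le _ _ := (eLpNorm'_zero hq).trans_le zero_le

theorem katoBound_heatFlow (h : KatoExponents d p r q α) {v : EuclideanSpace ℝ (Fin d) → ℝ≥0∞}
    (hv : Measurable v) (hvM : ∀ᵐ y, v y ≤ M) (hvr : eLpNorm' v r volume ≤ M) :
    KatoBound q α M fun t => heatFlow t v where
  apply_le _ ht x := heatFlow_le_of_ae_le ht hvM x
  eLpNorm'_le t ht :=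
    calc eLpNorm' (heatFlow t v) q volume
        ≤ ENNReal.ofReal (t ^ (-(d / 2 * (1 / r - 1 / q)))) * eLpNorm' v r volume :=
          eLpNorm'_heatFlow_le_mul ht hv h.one_le_r h.r_le_q
      _ ≤ M * ENNReal.ofReal (t ^ (-α)) := by
          rw [mul_comm, h.decay_eq]
          gcongr

theorem mul_ofReal_rpow_neg_rpow {s k : ℝ} (hs : 0 < s) (hk : 0 ≤ k) :
    (M * ENNReal.ofReal (s ^ (-α))) ^ k = M ^ k * ENNReal.ofReal (s ^ ((1 - α * k) - 1)) := by
  rw [ENNReal.mul_rpow_of_nonneg _ _ hk, ENNReal.ofReal_rpow_of_pos (by positivity),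
    ← Real.rpow_mul hs.le, neg_mul, sub_sub_cancel_left]

theorem KatoBound.heatFlow_rpow_le (hV : KatoBound q α M V) (h : KatoExponents d p r q α)
    (hVm : Measurable (Function.uncurry V)) {s t : ℝ} (hs : s ∈ Set.Ioo 0 t)
    (x : EuclideanSpace ℝ (Fin d)) :
    heatFlow (t - s) (fun y => V s y ^ p) x ≤ M ^ p *
      ENNReal.ofReal (s ^ ((1 - α * (p - 1)) - 1) * (t - s) ^ (α * (p - 1) - 1)) := by
  have hp1 : 0 ≤ p - 1 := (sub_pos.2 h.one_lt_p).le
  calc heatFlow (t - s) (fun y => V s y ^ p) x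
      ≤ M * (ENNReal.ofReal ((t - s) ^ (-(d * (p - 1) / (2 * q)))) *
          eLpNorm' (V s) q volume ^ (p - 1)) :=
        heatFlow_rpow_le_mul_eLpNorm' (sub_pos.2 hs.2) hVm.of_uncurry_left h.one_lt_p
          ((sub_le_self p zero_le_one).trans h.p_le_q) (.of_forall (hV.apply_le hs.1)) x
    _ ≤ M * (ENNReal.ofReal ((t - s) ^ (-(d * (p - 1) / (2 * q)))) *
          (M * ENNReal.ofReal (s ^ (-α))) ^ (p - 1)) := by
        gcongr
        exact hV.eLpNorm'_le hs.1
    _ = M ^ p *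
          ENNReal.ofReal (s ^ ((1 - α * (p - 1)) - 1) * (t - s) ^ (α * (p - 1) - 1)) := by
        rw [h.scaling, neg_sub, mul_ofReal_rpow_neg_rpow hs.1 hp1,
          ENNReal.ofReal_mul (Real.rpow_nonneg hs.1.le _),
          rpow_eq_self_mul_rpow_sub_one M h.one_lt_p.le]
        ring

theorem KatoBound.eLpNorm'_heatFlow_rpow_le (hV : KatoBound q α M V)
    (h : KatoExponents d p r q α) (hVm : Measurable (Function.uncurry V)) {s t : ℝ}
    (hs : s ∈ Set.Ioo 0 t) :
    eLpNorm' (heatFlow (t - s) fun y => V s y ^ p) q volume ≤ M ^ p *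
      ENNReal.ofReal (s ^ ((1 - α * p) - 1) * (t - s) ^ (α * (p - 1) - 1)) :=
  calc eLpNorm' (heatFlow (t - s) fun y => V s y ^ p) q volume
      ≤ ENNReal.ofReal ((t - s) ^ (-(d * (p - 1) / (2 * q)))) * eLpNorm' (V s) q volume ^ p :=
        _root_.eLpNorm'_heatFlow_rpow_le (sub_pos.2 hs.2) hVm.of_uncurry_left h.one_lt_p.le
          h.p_le_q
    _ ≤ ENNReal.ofReal ((t - s) ^ (-(d * (p - 1) / (2 * q)))) *
          (M * ENNReal.ofReal (s ^ (-α))) ^ p := by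
        have := h.p_pos
        gcongr
        exact hV.eLpNorm'_le hs.1
    _ = M ^ p * ENNReal.ofReal (s ^ ((1 - α * p) - 1) * (t - s) ^ (α * (p - 1) - 1)) := by
        rw [h.scaling, neg_sub, mul_ofReal_rpow_neg_rpow hs.1 h.p_pos.le,
          ENNReal.ofReal_mul (Real.rpow_nonneg hs.1.le _)]
        ring

/-- The constant of the nonlinear estimate: the sum of the Beta integrals that bound the Duhamel
term in `L^∞` and in `t^{-α} L^q`. -/
noncomputable def katoConstant (p α : ℝ) : ℝ≥0∞ :=
  ENNReal.ofReal (ProbabilityTheory.beta (1 - α * (p - 1)) (α * (p - 1))) +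
    ENNReal.ofReal (ProbabilityTheory.beta (1 - α * p) (α * (p - 1)))

theorem katoConstant_ne_top : katoConstant p α ≠ ⊤ :=
  ENNReal.add_ne_top.2 ⟨ENNReal.ofReal_ne_top, ENNReal.ofReal_ne_top⟩

theorem setLIntegral_mul_ofReal_rpow_mul_sub_rpow {a b t : ℝ} (ha : 0 < a) (hb : 0 < b)
    (ht : 0 < t) :
    ∫⁻ s in Set.Ioo 0 t, M * ENNReal.ofReal (s ^ (a - 1) * (t - s) ^ (b - 1)) =
      ENNReal.ofReal (ProbabilityTheory.beta a b) * M * ENNReal.ofReal (t ^ (a + b - 1)) := by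
  rw [lintegral_const_mul _ (by fun_prop), lintegral_Ioo_rpow_mul_sub_rpow ha hb ht]
  ring

theorem KatoBound.duhamel_rpow (hV : KatoBound q α M V) (h : KatoExponents d p r q α)
    (hVm : Measurable (Function.uncurry V)) :
    KatoBound q α (katoConstant p α * M ^ p) (duhamel fun s y => V s y ^ p) where
  apply_le t ht x :=
    calc duhamel (fun s y => V s y ^ p) t x
        ≤ ∫⁻ s in Set.Ioo 0 t, M ^ p *
            ENNReal.ofReal (s ^ ((1 - α * (p - 1)) - 1) * (t - s) ^ (α * (p - 1) - 1)) :=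
          setLIntegral_mono' measurableSet_Ioo fun _ hs => hV.heatFlow_rpow_le h hVm hs x
      _ = ENNReal.ofReal (ProbabilityTheory.beta (1 - α * (p - 1)) (α * (p - 1))) * M ^ p := by
          rw [setLIntegral_mul_ofReal_rpow_mul_sub_rpow
            (sub_pos.2 h.decay_mul_sub_one_lt_one) h.decay_mul_sub_one_pos ht,
            sub_add_cancel, sub_self, Real.rpow_zero, ENNReal.ofReal_one, mul_one]
      _ ≤ katoConstant p α * M ^ p := mul_le_mul_left le_self_add _
  eLpNorm'_le t ht :=
    calc eLpNorm' (duhamel (fun s y => V s y ^ p) t) q volume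
        ≤ ∫⁻ s in Set.Ioo 0 t, eLpNorm' (heatFlow (t - s) fun y => V s y ^ p) q volume :=
          eLpNorm'_duhamel_le (hVm.pow_const p) h.one_le_q
      _ ≤ ∫⁻ s in Set.Ioo 0 t, M ^ p *
            ENNReal.ofReal (s ^ ((1 - α * p) - 1) * (t - s) ^ (α * (p - 1) - 1)) :=
          setLIntegral_mono' measurableSet_Ioo fun _ hs =>
            hV.eLpNorm'_heatFlow_rpow_le h hVm hs
      _ = ENNReal.ofReal (ProbabilityTheory.beta (1 - α * p) (α * (p - 1))) * M ^ p *
            ENNReal.ofReal (t ^ (-α)) := by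
          rw [setLIntegral_mul_ofReal_rpow_mul_sub_rpow (sub_pos.2 h.decay_mul_lt_one)
            h.decay_mul_sub_one_pos ht, show 1 - α * p + α * (p - 1) - 1 = -α by ring]
      _ ≤ katoConstant p α * M ^ p * ENNReal.ofReal (t ^ (-α)) := by
          gcongr
          exact le_add_self

end KatoEstimates

section PicardIteration

variable {d : ℕ} {p r q α : ℝ} {v : EuclideanSpace ℝ (Fin d) → ℝ≥0∞}
  {V W : ℝ → EuclideanSpace ℝ (Fin d) → ℝ≥0∞}

/-- The map `V ↦ e^{tΔ} v + ∫₀ᵗ e^{(t-s)Δ} V(s)^p ds`, whose fixed points are the mild solutions of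
`∂ₜu = Δu + u^p` with initial datum `v`. -/
noncomputable def mildMap (p : ℝ) (v : EuclideanSpace ℝ (Fin d) → ℝ≥0∞)
    (V : ℝ → EuclideanSpace ℝ (Fin d) → ℝ≥0∞) : ℝ → EuclideanSpace ℝ (Fin d) → ℝ≥0∞ :=
  (fun t => heatFlow t v) + duhamel fun s y => V s y ^ p

theorem measurable_uncurry_mildMap (hv : Measurable v) (hV : Measurable (Function.uncurry V)) :
    Measurable (Function.uncurry (mildMap p v V)) :=
  have hv' : Measurable (Function.uncurry fun (_ : ℝ × EuclideanSpace ℝ (Fin d)) => v) :=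
    hv.comp measurable_snd
  (measurable_uncurry_heatFlow measurable_fst hv' measurable_snd).add
    (measurable_uncurry_duhamel (hV.pow_const p))

theorem monotone_mildMap (hp : 0 ≤ p) (v : EuclideanSpace ℝ (Fin d) → ℝ≥0∞) :
    Monotone (mildMap p v) := fun _ _ hVW =>
  add_le_add le_rfl (duhamel_mono fun s y => ENNReal.rpow_le_rpow (hVW s y) hp)

theorem mildMap_iSup {V : ℕ → ℝ → EuclideanSpace ℝ (Fin d) → ℝ≥0∞} (hp : 0 < p)
    (hV : ∀ n, Measurable (Function.uncurry (V n))) (hmono : Monotone V) :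
    mildMap p v (⨆ n, V n) = ⨆ n, mildMap p v (V n) := by
  have hpow : (fun s y => (⨆ n, V n) s y ^ p) = ⨆ n, fun s y => V n s y ^ p := by
    ext s y
    simp only [iSup_apply]
    exact (ENNReal.orderIsoRpow p hp).map_iSup fun n => V n s y
  ext t x
  rw [mildMap, hpow]
  simp only [mildMap, iSup_apply (ι := ℕ), Pi.add_apply]
  rw [duhamel_iSup (fun n => (hV n).pow_const p)
    (fun _ _ hnm s y => ENNReal.rpow_le_rpow (hmono hnm s y) hp.le), ENNReal.add_iSup]

theorem monotone_iterate_mildMap (hp : 0 ≤ p) (v : EuclideanSpace ℝ (Fin d) → ℝ≥0∞) :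
    Monotone fun n => (mildMap p v)^[n] 0 :=
  (monotone_mildMap hp v).monotone_iterate_of_le_map fun _ _ => zero_le

theorem measurable_uncurry_iterate_mildMap (hv : Measurable v) (n : ℕ) :
    Measurable (Function.uncurry ((mildMap p v)^[n] 0)) := by
  induction n with
  | zero => exact measurable_const
  | succ n ih =>
    rw [Function.iterate_succ_apply']
    exact measurable_uncurry_mildMap hv ih

theorem isFixedPt_iSup_iterate_mildMap (hp : 0 < p) (hv : Measurable v) :
    Function.IsFixedPt (mildMap p v) (⨆ n, (mildMap p v)^[n] 0) := by
  have hmono := monotone_iterate_mildMap hp.le v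
  calc mildMap p v (⨆ n, (mildMap p v)^[n] 0) = ⨆ n, (mildMap p v)^[n + 1] 0 := by
        simp_rw [mildMap_iSup hp (measurable_uncurry_iterate_mildMap hv) hmono,
          Function.iterate_succ_apply']
    _ = ⨆ n, (mildMap p v)^[n] 0 := hmono.iSup_nat_add 1

theorem KatoBound.mildMap {M ε : ℝ≥0∞} (hV : KatoBound q α M V) (h : KatoExponents d p r q α)
    (hVm : Measurable (Function.uncurry V)) (hv : Measurable v) (hvε : ∀ᵐ y, v y ≤ ε)
    (hvr : eLpNorm' v r volume ≤ ε) :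
    KatoBound q α (ε + katoConstant p α * M ^ p) (mildMap p v V) :=
  (katoBound_heatFlow h hv hvε hvr).add (hV.duhamel_rpow h hVm) (fun _ => measurable_heatFlow hv)
    (fun _ => (measurable_uncurry_duhamel (hVm.pow_const p)).of_uncurry_left) h.one_le_q

theorem katoBound_iterate_mildMap {ε : ℝ≥0∞} (h : KatoExponents d p r q α)
    (hε : katoConstant p α * (2 * ε) ^ p ≤ ε) (hv : Measurable v) (hvε : ∀ᵐ y, v y ≤ ε)
    (hvr : eLpNorm' v r volume ≤ ε) (n : ℕ) : KatoBound q α (2 * ε) ((mildMap p v)^[n] 0) := by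
  induction n with
  | zero => exact katoBound_zero (one_pos.trans_le h.one_le_q)
  | succ n ih =>
    rw [Function.iterate_succ_apply']
    refine (ih.mildMap h (measurable_uncurry_iterate_mildMap hv n) hv hvε hvr).mono ?_
    exact (add_le_add_right hε ε).trans_eq (two_mul ε).symm

theorem exists_pos_mul_two_mul_rpow_le {C : ℝ≥0∞} (hC : C ≠ ⊤) (hp : 1 < p) :
    ∃ ε : ℝ, 0 < ε ∧ C * (2 * ENNReal.ofReal ε) ^ p ≤ ENNReal.ofReal ε := by
  have hp1 : 0 < p - 1 := sub_pos.2 hp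
  have hlim : Filter.Tendsto (fun ε : ℝ => C * 2 ^ p * ENNReal.ofReal ε ^ (p - 1))
      (nhdsWithin 0 (Set.Ioi 0)) (nhds 0) :=
    (((ENNReal.continuous_const_mul (ENNReal.mul_ne_top hC (by finiteness))).comp
      (ENNReal.continuous_rpow_const.comp ENNReal.continuous_ofReal)).tendsto' 0 0
      (by simp [hp1])).mono_left nhdsWithin_le_nhds
  obtain ⟨ε, hε, hε0⟩ := ((hlim.eventually_le_const one_pos).and self_mem_nhdsWithin).exists
  refine ⟨ε, hε0, ?_⟩
  calc C * (2 * ENNReal.ofReal ε) ^ p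
      = C * 2 ^ p * ENNReal.ofReal ε ^ (p - 1) * ENNReal.ofReal ε := by
        rw [ENNReal.mul_rpow_of_nonneg _ _ (by linarith),
          rpow_eq_self_mul_rpow_sub_one (ENNReal.ofReal ε) hp.le]
        ring
    _ ≤ ENNReal.ofReal ε := mul_le_of_le_one_left' hε

theorem exists_isFixedPt_mildMap (h : KatoExponents d p r q α) :
    ∃ ε : ℝ, 0 < ε ∧ ∀ v : EuclideanSpace ℝ (Fin d) → ℝ≥0∞, Measurable v →
      (∀ᵐ y, v y ≤ ENNReal.ofReal ε) → eLpNorm' v r volume ≤ ENNReal.ofReal ε →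
      ∃ U : ℝ → EuclideanSpace ℝ (Fin d) → ℝ≥0∞, Measurable (Function.uncurry U) ∧
        (∀ t, 0 < t → ∀ x, U t x ≤ 2 * ENNReal.ofReal ε) ∧
        Function.IsFixedPt (mildMap p v) U := by
  obtain ⟨ε, hε0, hε⟩ := exists_pos_mul_two_mul_rpow_le (katoConstant_ne_top (α := α)) h.one_lt_p
  refine ⟨ε, hε0, fun v hv hvε hvr => ⟨⨆ n, (mildMap p v)^[n] 0, ?_, fun t ht x => ?_,
    isFixedPt_iSup_iterate_mildMap h.p_pos hv⟩⟩
  · simp only [Function.uncurry_def, iSup_apply]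
    exact Measurable.iSup (measurable_uncurry_iterate_mildMap hv)
  · simp only [iSup_apply]
    exact iSup_le fun n => (katoBound_iterate_mildMap h hε hv hvε hvr n).apply_le ht x

end PicardIteration

section RealValued

variable {X : Type*} {t : ℝ} {u₀ : X → ℝ} {U : ℝ → X → ℝ≥0∞}

/-- The real-valued function of space-time that equals `u₀` at time `0` and `U` at all other times.
The value at time `0` has to be prescribed because `heatKernel d 0` is not the Dirac mass. -/
noncomputable def toRealWithDatum (u₀ : X → ℝ) (U : ℝ → X → ℝ≥0∞) :
    ℝ → X → ℝ :=
  Function.update (fun t x => (U t x).toReal) 0 u₀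

theorem toRealWithDatum_zero : toRealWithDatum u₀ U 0 = u₀ := Function.update_self ..

theorem toRealWithDatum_of_pos (ht : 0 < t) :
    toRealWithDatum u₀ U t = fun x => (U t x).toReal := Function.update_of_ne ht.ne' ..

variable [MeasurableSpace X] {μ : Measure X}

theorem measurable_uncurry_toRealWithDatum (hu₀ : Measurable u₀)
    (hU : Measurable (Function.uncurry U)) :
    Measurable (Function.uncurry (toRealWithDatum u₀ U)) := by
  have hite : Function.uncurry (toRealWithDatum u₀ U) =
      fun z => if z.1 = 0 then u₀ z.2 else (U z.1 z.2).toReal := by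
    ext z
    simp only [Function.uncurry, toRealWithDatum, Function.update_apply]
    split_ifs <;> rfl
  rw [hite]
  exact Measurable.ite (measurable_fst (measurableSet_singleton 0)) (hu₀.comp measurable_snd)
    hU.ennreal_toReal

theorem toRealWithDatum_nonneg (hpos : 0 ≤ᵐ[μ] u₀) (ht : 0 ≤ t) :
    0 ≤ᵐ[μ] toRealWithDatum u₀ U t := by
  rcases ht.eq_or_lt with rfl | ht
  · rwa [toRealWithDatum_zero]
  · rw [toRealWithDatum_of_pos ht]
    exact .of_forall fun x => ENNReal.toReal_nonneg

theorem eLpNorm_top_toRealWithDatum_le {B : ℝ≥0∞} (hu₀ : eLpNorm u₀ ⊤ μ ≤ B)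
    (hU : ∀ t, 0 < t → ∀ x, U t x ≤ B) (ht : 0 ≤ t) :
    eLpNorm (toRealWithDatum u₀ U t) ⊤ μ ≤ B := by
  rcases ht.eq_or_lt with rfl | ht
  · rwa [toRealWithDatum_zero]
  · rw [toRealWithDatum_of_pos ht, eLpNorm_exponent_top]
    refine eLpNormEssSup_le_of_ae_enorm_bound (.of_forall fun x => ?_)
    rw [Real.enorm_of_nonneg ENNReal.toReal_nonneg]
    exact ENNReal.ofReal_toReal_le.trans (hU t ht x)

end RealValued

section MildSolution

variable {d : ℕ} {p t : ℝ} {u₀ : EuclideanSpace ℝ (Fin d) → ℝ}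
  {U : ℝ → EuclideanSpace ℝ (Fin d) → ℝ≥0∞}

theorem integral_heatKernel_sub_mul_toReal {g : EuclideanSpace ℝ (Fin d) → ℝ≥0∞} (ht : 0 ≤ t)
    (hg : Measurable g) (hg_top : ∀ᵐ y, g y < ⊤) (x : EuclideanSpace ℝ (Fin d)) :
    ∫ y, heatKernel d t (x - y) * (g y).toReal = (heatFlow t g x).toReal := by
  have hmeas : Measurable fun y => ENNReal.ofReal (heatKernel d t (x - y)) * g y :=
    (measurable_ofReal_heatKernel_const_sub t x).mul hg
  rw [heatFlow, ← integral_toReal hmeas.aemeasurable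
    (hg_top.mono fun y hy => ENNReal.mul_lt_top ENNReal.ofReal_lt_top hy)]
  simp_rw [ENNReal.toReal_mul, ENNReal.toReal_ofReal (heatKernel_nonneg ht _)]

theorem integral_heatKernel_sub_mul_of_nonneg (ht : 0 ≤ t) (hu₀ : Measurable u₀)
    (hpos : 0 ≤ᵐ[volume] u₀) (x : EuclideanSpace ℝ (Fin d)) :
    ∫ y, heatKernel d t (x - y) * u₀ y =
      (heatFlow t (fun y => ENNReal.ofReal (u₀ y)) x).toReal := by
  rw [← integral_heatKernel_sub_mul_toReal ht hu₀.ennreal_ofReal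
    (.of_forall fun _ => ENNReal.ofReal_lt_top)]
  refine integral_congr_ae ?_
  filter_upwards [hpos] with y hy
  rw [ENNReal.toReal_ofReal hy]

theorem setIntegral_integral_heatKernel_sub_mul_toReal
    {F : ℝ → EuclideanSpace ℝ (Fin d) → ℝ≥0∞} (hF : Measurable (Function.uncurry F))
    (hF_top : ∀ s, 0 < s → ∀ᵐ y, F s y < ⊤) {x : EuclideanSpace ℝ (Fin d)}
    (hD : duhamel F t x ≠ ⊤) :
    ∫ s in Set.Ioc 0 t, ∫ y, heatKernel d (t - s) (x - y) * (F s y).toReal =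
      (duhamel F t x).toReal := by
  have hflow : Measurable fun s => heatFlow (t - s) (F s) x :=
    (measurable_uncurry_heatFlow_sub hF t).of_uncurry_right
  rw [duhamel, ← integral_toReal hflow.aemeasurable (ae_lt_top hflow hD),
    integral_Ioc_eq_integral_Ioo]
  exact setIntegral_congr_fun measurableSet_Ioo fun s hs =>
    integral_heatKernel_sub_mul_toReal (sub_pos.2 hs.2).le hF.of_uncurry_left (hF_top s hs.1) x

theorem toRealWithDatum_eq_of_isFixedPt (hp : 0 ≤ p) (hu₀ : Measurable u₀)
    (hpos : 0 ≤ᵐ[volume] u₀) (hU : Measurable (Function.uncurry U))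
    (hU_top : ∀ t, 0 < t → ∀ x, U t x < ⊤)
    (hfix : Function.IsFixedPt (mildMap p fun y => ENNReal.ofReal (u₀ y)) U) (ht : 0 < t)
    (x : EuclideanSpace ℝ (Fin d)) :
    toRealWithDatum u₀ U t x = (∫ y, heatKernel d t (x - y) * u₀ y) +
      ∫ s in Set.Ioc 0 t, ∫ y, heatKernel d (t - s) (x - y) * toRealWithDatum u₀ U s y ^ p := by
  have hsum : heatFlow t (fun y => ENNReal.ofReal (u₀ y)) x +
      duhamel (fun s y => U s y ^ p) t x = U t x := congr_fun₂ hfix t x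
  obtain ⟨hheat, hduhamel⟩ := ENNReal.add_ne_top.1 (hsum ▸ (hU_top t ht x).ne)
  have hsource : ∀ s ∈ Set.Ioc 0 t,
      ∫ y, heatKernel d (t - s) (x - y) * toRealWithDatum u₀ U s y ^ p =
        ∫ y, heatKernel d (t - s) (x - y) * (U s y ^ p).toReal := fun s hs => by
    simp_rw [toRealWithDatum_of_pos hs.1, ENNReal.toReal_rpow]
  have hsource_top : ∀ s, 0 < s → ∀ᵐ y, U s y ^ p < ⊤ := fun s hs =>
    .of_forall fun y => ENNReal.rpow_lt_top_of_nonneg hp (hU_top s hs y).ne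
  rw [integral_heatKernel_sub_mul_of_nonneg ht.le hu₀ hpos,
    setIntegral_congr_fun measurableSet_Ioc hsource,
    setIntegral_integral_heatKernel_sub_mul_toReal (hU.pow_const p) hsource_top hduhamel,
    ← ENNReal.toReal_add hheat hduhamel, hsum, toRealWithDatum_of_pos ht]

end MildSolution

/-- **Global existence above the Fujita exponent** (commutative case of part (iii) of the
paper's Theorem 7.1): for `p > 1 + 2/d` and `r = d(p−1)/2`, there is `ε > 0` such that every
nonnegative initial datum `u₀` with `‖u₀‖_{L^r} + ‖u₀‖_{L^∞} ≤ ε` launches a nonnegative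
global mild solution of `∂ₜu = Δu + u^p`, locally bounded in time in `L^∞`. -/
theorem fujita_global_existence (d : ℕ) (hd : 1 ≤ d) (p : ℝ)
    (hp : 1 + 2 / (d : ℝ) < p) (r : ℝ) (hr : r = d * (p - 1) / 2) :
    ∃ ε : ℝ, 0 < ε ∧
      ∀ u₀ : EuclideanSpace ℝ (Fin d) → ℝ, Measurable u₀ → 0 ≤ᵐ[volume] u₀ →
        eLpNorm u₀ (ENNReal.ofReal r) volume + eLpNorm u₀ ⊤ volume ≤
          ENNReal.ofReal ε →
        ∃ u : ℝ → EuclideanSpace ℝ (Fin d) → ℝ,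
          Measurable (Function.uncurry u) ∧
          (∀ t : ℝ, 0 ≤ t → 0 ≤ᵐ[volume] u t) ∧
          (∀ T : ℝ, 0 < T →
            (⨆ t ∈ Set.Icc (0 : ℝ) T, eLpNorm (u t) ⊤ volume) < ⊤) ∧
          u 0 =ᵐ[volume] u₀ ∧
          (∀ t : ℝ, 0 < t → ∀ᵐ x ∂volume, u t x =
            (∫ y, heatKernel d t (x - y) * u₀ y) +
              ∫ s in Set.Ioc (0 : ℝ) t,
                ∫ y, heatKernel d (t - s) (x - y) * u s y ^ p) := by
  obtain ⟨q, α, hK⟩ := exists_katoExponents hd hp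
  rw [← hr] at hK
  obtain ⟨ε, hε0, hsolve⟩ := exists_isFixedPt_mildMap hK
  refine ⟨ε, hε0, fun u₀ hu₀ hpos hnorm => ?_⟩
  have hnorm_r := le_self_add.trans hnorm
  have hnorm_top := le_add_self.trans hnorm
  obtain ⟨U, hU, hU_le, hU_fix⟩ := hsolve (fun y => ENNReal.ofReal (u₀ y)) hu₀.ennreal_ofReal
    ((ae_ofReal_le_eLpNorm_top u₀ _).mono fun _ hy => hy.trans hnorm_top)
    ((eLpNorm'_ofReal_le_eLpNorm (one_pos.trans_le hK.one_le_r) u₀ _).trans hnorm_r)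
  have h2ε : 2 * ENNReal.ofReal ε < ⊤ := by finiteness
  have hnorm_two : eLpNorm u₀ ⊤ volume ≤ 2 * ENNReal.ofReal ε :=
    hnorm_top.trans (le_mul_of_one_le_left' one_le_two)
  refine ⟨toRealWithDatum u₀ U, measurable_uncurry_toRealWithDatum hu₀ hU,
    fun _ ht => toRealWithDatum_nonneg hpos ht, fun T _ => ?_,
    .of_eq toRealWithDatum_zero, fun t ht => .of_forall fun x => ?_⟩
  · exact (iSup₂_le fun t ht =>
      eLpNorm_top_toRealWithDatum_le hnorm_two hU_le ht.1).trans_lt h2ε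
  · exact toRealWithDatum_eq_of_isFixedPt hK.p_pos.le hu₀ hpos hU
      (fun s hs y => (hU_le s hs y).trans_lt h2ε) hU_fix ht x
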